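/- arXiv:2202.12846 — 4 statements merged into one kernel-verified Lean document; each statement's English description precedes it below -/
import Mathlib

section
/- Let σ : ℝ → ℝ be expressive. Then for every k ≥ 0 and every P ≥ k such that Σ^{(P)}(0) ≠ 0, where Σ(t) := E_{Y∼N(0,1)}[σ(Y+t)] is the Gaussian smoothing of σ, it holds that INAL(M_k, σ) = Ω(n^{-P}) as n → ∞, where M_k(x) = ∏_{i=1}^k x_i is viewed as a Boolean function on {±1}^n for every n ≥ k. -/
open MeasureTheory ProbabilityTheory Filter Finset Asymptotics
open scoped NNReal ENNReal

noncomputable section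

/-- The ±1 value encoded by a Boolean bit. -/
def bsign (b : Bool) : ℝ := if b then 1 else -1

/-- Expectation over a uniformly random point of the Boolean cube `{±1}^n`. -/
def bExp (n : ℕ) (g : (Fin n → Bool) → ℝ) : ℝ :=
  (∑ x : Fin n → Bool, g x) / 2 ^ n

/-- A function on the Boolean cube is Boolean(-valued) if it takes values in `{±1}`. -/
def IsBooleanFn {n : ℕ} (f : (Fin n → Bool) → ℝ) : Prop := ∀ x, f x = 1 ∨ f x = -1

/-- Initialization distribution: the weights `w : ℝⁿ` and the bias `b` are
iid `N(0, 1/n)` Gaussians. -/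
def initMeasure (n : ℕ) : Measure ((Fin n → ℝ) × ℝ) :=
  (Measure.pi fun _ : Fin n => gaussianReal 0 (n : ℝ≥0)⁻¹).prod (gaussianReal 0 (n : ℝ≥0)⁻¹)

/-- Initial alignment `INAL(f, σ) = E_{w,b} [ (E_x [f(x) σ(wᵀx + b)])² ]`. -/
def INAL (n : ℕ) (f : (Fin n → Bool) → ℝ) (σ : ℝ → ℝ) : ℝ :=
  ∫ θ : (Fin n → ℝ) × ℝ,
    (bExp n fun x => f x * σ (∑ i, θ.1 i * bsign (x i) + θ.2)) ^ 2 ∂ initMeasure n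

/-- The `v`-Gaussian smoothing `Σ_v(t) = E_{Y ∼ N(0,v)} [σ(Y + t)]`. -/
def gsmooth (σ : ℝ → ℝ) (v : ℝ) (t : ℝ) : ℝ :=
  ∫ y, σ (y + t) ∂ gaussianReal 0 v.toNNReal

/-- `σ` is polynomially bounded: `|σ(x)| ≤ C |x|^c + C` for some `C, c > 0`. -/
def PolyBounded (σ : ℝ → ℝ) : Prop :=
  ∃ C : ℝ, 0 < C ∧ ∃ c : ℕ, 0 < c ∧ ∀ x : ℝ, |σ x| ≤ C * |x| ^ c + C

/-- `σ` is expressive: measurable, polynomially bounded, and its Gaussian smoothing has no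
two consecutive vanishing derivatives at `0`. -/
def Expressive (σ : ℝ → ℝ) : Prop :=
  Measurable σ ∧ PolyBounded σ ∧
    ∀ m : ℕ, iteratedDeriv m (gsmooth σ 1) 0 ≠ 0 ∨ iteratedDeriv (m + 1) (gsmooth σ 1) 0 ≠ 0

/-- A nonnegative sequence is negligible if it decays faster than any inverse polynomial. -/
def Negligible (g : ℕ → ℝ) : Prop :=
  ∀ c : ℕ, Tendsto (fun n : ℕ => (n : ℝ) ^ c * g n) atTop (nhds 0)

/-- Fourier character `M_S(x) = ∏_{i ∈ S} x_i`. -/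
def chi {n : ℕ} (S : Finset (Fin n)) (x : Fin n → Bool) : ℝ := ∏ i ∈ S, bsign (x i)

/-- Fourier coefficient `f̂(S) = E_x [f(x) M_S(x)]`. -/
def fourierCoef (n : ℕ) (f : (Fin n → Bool) → ℝ) (S : Finset (Fin n)) : ℝ :=
  bExp n fun x => f x * chi S x

/-- Fourier weight up to degree `k`: `W^{≤k}(f)`. -/
def weightLE (n k : ℕ) (f : (Fin n → Bool) → ℝ) : ℝ :=
  ∑ S ∈ Finset.univ.filter (fun S : Finset (Fin n) => S.card ≤ k), fourierCoef n f S ^ 2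

/-- Fourier weight strictly below degree `k`: `W^{<k}(f)`. -/
def weightLT (n k : ℕ) (f : (Fin n → Bool) → ℝ) : ℝ :=
  ∑ S ∈ Finset.univ.filter (fun S : Finset (Fin n) => S.card < k), fourierCoef n f S ^ 2

/-- The monomial `M_k(x) = ∏_{i=1}^k x_i`, viewed as a function on `{±1}^n`. -/
def monomial (n k : ℕ) : (Fin n → Bool) → ℝ :=
  fun x => ∏ i ∈ Finset.univ.filter (fun i : Fin n => (i : ℕ) < k), bsign (x i)

/-- The `N`-extension of `f : {±1}^n → ℝ` (for `n ≤ N`): ignore the last `N - n` coordinates. -/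
def extendFn (n N : ℕ) (f : (Fin n → Bool) → ℝ) : (Fin N → Bool) → ℝ :=
  fun x => f fun i => if h : (i : ℕ) < N then x ⟨i, h⟩ else false

/-- Cross-predictability of (the uniform distribution on) the orbit of `f` under coordinate
permutations, with uniform inputs: `CP(orb(f), U^N)`. -/
def orbitCP (N : ℕ) (f : (Fin N → Bool) → ℝ) : ℝ :=
  (∑ π : Equiv.Perm (Fin N), ∑ π' : Equiv.Perm (Fin N),
      (bExp N fun x => f (fun i => x (π i)) * f (fun i => x (π' i))) ^ 2) /
    (Fintype.card (Equiv.Perm (Fin N))) ^ 2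

/-- `N = n^{1+ε}` (rounded up). -/
def Ndim (ε : ℝ) (n : ℕ) : ℕ := ⌈(n : ℝ) ^ (1 + ε)⌉₊

lemma aux_gauss_dom (s : ℝ≥0) (hs0 : 0 < s) (hs1 : s < 1) :
    ∃ C : ℝ≥0, 1 ≤ C ∧ ∀ (u : ℝ≥0) (h : ℝ), 0 < u → h ^ 2 = u →
      gaussianReal h (s * u) ≤ C • gaussianReal 0 u := by
  have hs0' : (0:ℝ) < s := by exact_mod_cast hs0
  have hs1' : (s:ℝ) < 1 := by exact_mod_cast hs1
  set C0 : ℝ := (Real.sqrt s)⁻¹ * Real.exp (1 / (2 * (1 - s))) with hC0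
  have hC0pos : 0 ≤ C0 := by positivity
  refine ⟨Real.toNNReal C0 + 1, by simp, ?_⟩
  intro u h hu hh
  have hu' : (0:ℝ) < u := by exact_mod_cast hu
  have key : ∀ y, gaussianPDFReal h (s * u) y ≤ C0 * gaussianPDFReal 0 u y := by
    intro y
    unfold gaussianPDFReal
    have e1 : (Real.sqrt (2 * Real.pi * ((s * u : ℝ≥0) : ℝ)))⁻¹
        = (Real.sqrt s)⁻¹ * (Real.sqrt (2 * Real.pi * u))⁻¹ := by
      rw [← mul_inv, ← Real.sqrt_mul hs0'.le]
      congr 2; push_cast; ring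
    have e2 : Real.exp (-(y - h) ^ 2 / (2 * ((s * u : ℝ≥0) : ℝ))) ≤
        Real.exp (1 / (2 * (1 - s))) * Real.exp (-(y - 0) ^ 2 / (2 * u)) := by
      rw [← Real.exp_add]
      apply Real.exp_le_exp.2
      have h1 : (0:ℝ) < 1 - s := by linarith
      push_cast
      have : 1 / (2 * (1 - (s:ℝ))) + -(y - 0) ^ 2 / (2 * u) - -(y - h) ^ 2 / (2 * (s * u))
          = ((1 - s) * (y - h) - s * h) ^ 2 / (2 * (1 - s) * s * u) := by
        have : (1:ℝ) = h ^ 2 / u := by rw [hh]; field_simp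
        rw [show 1 / (2 * (1 - (s:ℝ))) = (h ^ 2 / u) / (2 * (1 - s)) by rw [← this]]
        field_simp
        ring
      have h2 : 0 ≤ ((1 - s) * (y - h) - s * h) ^ 2 / (2 * (1 - s) * s * u) := by positivity
      linarith
    rw [e1, hC0]
    calc _ ≤ (Real.sqrt s)⁻¹ * (Real.sqrt (2 * Real.pi * u))⁻¹ *
          (Real.exp (1 / (2 * (1 - s))) * Real.exp (-(y - 0) ^ 2 / (2 * u))) := by gcongr
      _ = _ := by ring
  have hle : gaussianReal h (s * u) ≤ (Real.toNNReal C0) • gaussianReal 0 u := by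
    rw [gaussianReal_of_var_ne_zero _ (mul_pos hs0 hu).ne', gaussianReal_of_var_ne_zero _ hu.ne']
    rw [show (Real.toNNReal C0) • (volume : Measure ℝ).withDensity (gaussianPDF 0 u)
      = (ENNReal.ofReal C0) • (volume : Measure ℝ).withDensity (gaussianPDF 0 u) from rfl]
    rw [← withDensity_smul _ (measurable_gaussianPDF _ _)]
    apply withDensity_mono
    refine Eventually.of_forall fun y => ?_
    simp only [gaussianPDF, Pi.smul_apply, smul_eq_mul]
    rw [← ENNReal.ofReal_mul hC0pos]
    exact ENNReal.ofReal_le_ofReal (key y)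
  refine hle.trans ?_
  rw [add_smul]
  exact Measure.le_add_right le_rfl

lemma aux_pi_dom {ι : Type*} [Fintype ι] (μ ν : ι → Measure ℝ)
    [∀ i, IsProbabilityMeasure (μ i)] [∀ i, IsProbabilityMeasure (ν i)]
    (C : ι → ℝ≥0) (hC : ∀ i, 1 ≤ C i) (h : ∀ i, ν i ≤ C i • μ i) :
    Measure.pi ν ≤ (∏ i, C i) • Measure.pi μ := by
  have hpos : (∏ i, C i) ≠ 0 := by
    apply Finset.prod_ne_zero_iff.2
    intro i _; exact (lt_of_lt_of_le zero_lt_one (hC i)).ne'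
  have h1 : (∏ i, C i)⁻¹ • (Measure.pi ν).toOuterMeasure ≤
      OuterMeasure.pi fun i => (μ i).toOuterMeasure := by
    rw [OuterMeasure.le_pi]
    intro s _
    change (∏ i, C i)⁻¹ • (Measure.pi ν) (Set.pi Set.univ s) ≤ ∏ i, μ i (s i)
    rw [Measure.pi_pi, ENNReal.smul_def, smul_eq_mul, ENNReal.coe_inv hpos, mul_comm,
      ← div_eq_mul_inv]
    refine ENNReal.div_le_of_le_mul' ?_
    rw [ENNReal.ofNNReal_finsetProd, ← Finset.prod_mul_distrib]
    refine Finset.prod_le_prod' fun i _ => ?_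
    exact h i (s i)
  rw [Measure.le_iff]
  intro s hs
  have h2 := h1 s
  have h3 : Measure.pi μ s = OuterMeasure.pi (fun i => (μ i).toOuterMeasure) s := by
    rw [Measure.pi, toMeasure_apply _ _ hs]
  rw [← h3] at h2
  change (∏ i, C i)⁻¹ • (Measure.pi ν) s ≤ _ at h2
  rw [ENNReal.smul_def, smul_eq_mul, ENNReal.coe_inv hpos, mul_comm, ← div_eq_mul_inv] at h2
  change _ ≤ (∏ i, C i) • Measure.pi μ s
  rw [ENNReal.smul_def, smul_eq_mul]
  rwa [ENNReal.div_le_iff' (by exact_mod_cast hpos) ENNReal.coe_ne_top] at h2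

lemma aux_bsign_sq (b : Bool) : bsign b ^ 2 = 1 := by cases b <;> simp [bsign]

lemma aux_law (n : ℕ) (m : Fin n → ℝ) (v : Fin n → ℝ≥0) (c : ℝ) (w : ℝ≥0) (x : Fin n → Bool) :
    ((Measure.pi fun i => gaussianReal (m i) (v i)).prod (gaussianReal c w)).map
      (fun θ : (Fin n → ℝ) × ℝ => ∑ i, θ.1 i * bsign (x i) + θ.2) =
    gaussianReal (∑ i, m i * bsign (x i) + c) (∑ i, v i + w) := by
  have hpi : (Measure.pi fun i => gaussianReal (m i) (v i)).map
      (fun p : Fin n → ℝ => ∑ i, p i * bsign (x i)) =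
      gaussianReal (∑ i, m i * bsign (x i)) (∑ i, v i) := by
    have h1 : (Measure.pi fun i => gaussianReal (m i) (v i)).map
        (fun p i => p i * bsign (x i)) =
        Measure.pi fun i => gaussianReal (m i * bsign (x i)) (v i) := by
      rw [Measure.pi_map_pi (f := fun i y => y * bsign (x i)) (fun i => by fun_prop)]
      congr 1
      funext i
      rw [gaussianReal_map_mul_const]
      congr 1
      · ring
      · ext; simp [aux_bsign_sq]
    have h2 : (fun p : Fin n → ℝ => ∑ i, p i * bsign (x i)) =
        (fun p : Fin n → ℝ => ∑ i, p i) ∘ (fun p i => p i * bsign (x i)) := rfl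
    rw [h2, ← Measure.map_map (by fun_prop) (by fun_prop), h1]
    apply Measure.ext_of_charFun
    rw [charFun_map_sum_pi_eq_prod]
    ext t
    simp only [Finset.prod_apply, charFun_gaussianReal]
    rw [← Complex.exp_sum]
    congr 1
    push_cast
    rw [Finset.sum_sub_distrib, Finset.mul_sum, Finset.sum_mul, ← Finset.sum_div, Finset.sum_mul]
  have hind := indepFun_prod (μ := Measure.pi fun i => gaussianReal (m i) (v i))
    (ν := gaussianReal c w) (X := fun p : Fin n → ℝ => ∑ i, p i * bsign (x i)) (Y := id)
    (by fun_prop) measurable_id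
  refine gaussianReal_add_gaussianReal_of_indepFun hind ?_ ?_
  · have : (fun ω : (Fin n → ℝ) × ℝ => ∑ i, ω.1 i * bsign (x i)) =
      (fun p : Fin n → ℝ => ∑ i, p i * bsign (x i)) ∘ Prod.fst := rfl
    rw [this, ← Measure.map_map (by fun_prop) measurable_fst, Measure.map_fst_prod]
    simpa using hpi
  · change Measure.map Prod.snd _ = _
    rw [Measure.map_snd_prod]; simp

lemma aux_memLp (σ : ℝ → ℝ) (hm : Measurable σ) (hb : PolyBounded σ) (m : ℝ) (v : ℝ≥0) :
    MemLp σ 2 (gaussianReal m v) := by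
  obtain ⟨C, hC, c, hc, hbd⟩ := hb
  have h1 : MemLp (fun x : ℝ => |x| ^ c) 2 (gaussianReal m v) := by
    have h0 := (memLp_id_gaussianReal' (μ := m) (v := v) ((2 * c : ℕ) : ℝ≥0∞)
      (ENNReal.natCast_ne_top _))
    have hi := h0.integrable_norm_pow (by positivity)
    rw [memLp_two_iff_integrable_sq (by fun_prop)]
    refine hi.congr (Eventually.of_forall fun x => ?_)
    simp only [id, Real.norm_eq_abs]
    rw [← pow_mul, mul_comm]
  have h2 : MemLp (fun x : ℝ => C * |x| ^ c + C) 2 (gaussianReal m v) :=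
    (h1.const_mul C).add (memLp_const C)
  refine h2.mono hm.aestronglyMeasurable (Eventually.of_forall fun x => ?_)
  rw [Real.norm_eq_abs, Real.norm_eq_abs]
  exact (hbd x).trans (le_abs_self _)

lemma aux_contDiff_mgf (g : ℝ → ℝ) (hm : Measurable g) (h0 : ∀ x, 0 ≤ g x)
    (hL : MemLp g 2 (gaussianReal 0 1)) :
    ContDiff ℝ ⊤ (fun t => ∫ y, Real.exp (t * y) * g y ∂ gaussianReal 0 1) := by
  set μ : Measure ℝ := (gaussianReal 0 1).withDensity (fun y => ENNReal.ofReal (g y)) with hμ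
  have hset : integrableExpSet id μ = Set.univ := by
    ext t
    simp only [integrableExpSet, Set.mem_ofPred_eq, Set.mem_univ, iff_true, id]
    rw [hμ, integrable_withDensity_iff_integrable_smul' (by fun_prop) (by simp)]
    have he : MemLp (fun y : ℝ => Real.exp (t * y)) 2 (gaussianReal 0 1) := by
      rw [memLp_two_iff_integrable_sq (by fun_prop)]
      refine (integrable_exp_mul_gaussianReal (μ := 0) (v := 1) (2 * t)).congr
        (Eventually.of_forall fun y => ?_)
      simp only
      rw [← Real.exp_nat_mul]; congr 1; push_cast; ring
    have := MemLp.integrable_mul hL he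
    refine this.congr (Eventually.of_forall fun y => ?_)
    simp [ENNReal.toReal_ofReal (h0 y)]
  have heq : (fun t => ∫ y, Real.exp (t * y) * g y ∂ gaussianReal 0 1) = mgf id μ := by
    funext t
    rw [mgf, hμ, integral_withDensity_eq_integral_toReal_smul (by fun_prop) (by simp)]
    refine integral_congr_ae (Eventually.of_forall fun y => ?_)
    simp [ENNReal.toReal_ofReal (h0 y), mul_comm]
  rw [heq, contDiff_iff_contDiffAt]
  intro t
  exact (analyticAt_mgf (by rw [hset]; simp)).contDiffAt

lemma aux_gsmooth_shift (σ : ℝ → ℝ) (hm : Measurable σ) (t : ℝ) :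
    ∫ y, σ y ∂ gaussianReal t 1 = gsmooth σ 1 t := by
  unfold gsmooth
  have h := gaussianReal_map_add_const (μ := 0) (v := 1) t
  rw [zero_add] at h
  rw [← h, integral_map (by fun_prop) hm.aestronglyMeasurable]
  simp

lemma aux_contDiff (σ : ℝ → ℝ) (hm : Measurable σ) (hb : PolyBounded σ) :
    ContDiff ℝ ⊤ (gsmooth σ 1) := by
  have hL := aux_memLp σ hm hb 0 1
  have hp := aux_contDiff_mgf (fun x => max (σ x) 0) (by fun_prop) (fun x => le_max_right _ _)
    hL.pos_part
  have hn := aux_contDiff_mgf (fun x => max (-σ x) 0) (by fun_prop) (fun x => le_max_right _ _)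
    hL.neg_part
  have hE : ∀ (g : ℝ → ℝ), MemLp g 2 (gaussianReal 0 1) → ∀ t,
      Integrable (fun y => Real.exp (t * y) * g y) (gaussianReal 0 1) := by
    intro g hg t
    have he : MemLp (fun y : ℝ => Real.exp (t * y)) 2 (gaussianReal 0 1) := by
      rw [memLp_two_iff_integrable_sq (by fun_prop)]
      refine (integrable_exp_mul_gaussianReal (μ := 0) (v := 1) (2 * t)).congr
        (Eventually.of_forall fun y => ?_)
      simp only
      rw [← Real.exp_nat_mul]; congr 1; push_cast; ring
    exact MemLp.integrable_mul he hg
  have heq : gsmooth σ 1 = fun t => Real.exp (-t ^ 2 / 2) *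
      ((∫ y, Real.exp (t * y) * max (σ y) 0 ∂ gaussianReal 0 1) -
        ∫ y, Real.exp (t * y) * max (-σ y) 0 ∂ gaussianReal 0 1) := by
    funext t
    rw [← integral_sub (hE _ hL.pos_part t) (hE _ hL.neg_part t), ← aux_gsmooth_shift σ hm t,
      integral_gaussianReal_eq_integral_smul one_ne_zero,
      integral_gaussianReal_eq_integral_smul one_ne_zero, ← integral_const_mul]
    refine integral_congr_ae (Eventually.of_forall fun y => ?_)
    simp only [smul_eq_mul, gaussianPDFReal]
    have h1 : Real.exp (t * y) * max (σ y) 0 - Real.exp (t * y) * max (-σ y) 0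
        = Real.exp (t * y) * σ y := by
      rw [← mul_sub]; congr 1
      rcases le_total (σ y) 0 with h | h
      · rw [max_eq_right h, max_eq_left (by linarith)]; ring
      · rw [max_eq_left h, max_eq_right (by linarith)]; ring
    rw [h1]
    have h2 : Real.exp (-(y - t) ^ 2 / (2 * ((1 : ℝ≥0) : ℝ))) = Real.exp (-t ^ 2 / 2) *
        Real.exp (-(y - 0) ^ 2 / (2 * ((1 : ℝ≥0) : ℝ))) * Real.exp (t * y) := by
      rw [← Real.exp_add, ← Real.exp_add]; congr 1; push_cast; ring
    rw [h2]; ring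
  rw [heq]
  exact ContDiff.mul (by fun_prop) (hp.sub hn)

lemma aux_bExp_add (n : ℕ) (f g : (Fin n → Bool) → ℝ) :
    bExp n (fun x => f x + g x) = bExp n f + bExp n g := by
  simp [bExp, Finset.sum_add_distrib, add_div]

lemma aux_bExp_sum {ι : Type*} (n : ℕ) (T : Finset ι) (f : ι → (Fin n → Bool) → ℝ) :
    bExp n (fun x => ∑ i ∈ T, f i x) = ∑ i ∈ T, bExp n (f i) := by
  simp only [bExp]
  rw [Finset.sum_comm, Finset.sum_div]

lemma aux_bExp_const_mul (n : ℕ) (c : ℝ) (f : (Fin n → Bool) → ℝ) :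
    bExp n (fun x => c * f x) = c * bExp n f := by
  simp [bExp, ← Finset.mul_sum, mul_div_assoc]

lemma aux_bExp_abs_le (n : ℕ) (f : (Fin n → Bool) → ℝ) (B : ℝ) (h : ∀ x, |f x| ≤ B) :
    |bExp n f| ≤ B := by
  unfold bExp
  rw [abs_div, abs_of_pos (by positivity : (0:ℝ) < 2 ^ n), div_le_iff₀ (by positivity)]
  refine (Finset.abs_sum_le_sum_abs _ _).trans ((Finset.sum_le_sum fun x _ => h x).trans ?_)
  simp [mul_comm]

lemma aux_bExp_chi (n : ℕ) (S : Finset (Fin n)) :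
    bExp n (fun x => chi S x) = if S = ∅ then 1 else 0 := by
  split_ifs with h
  · subst h; simp [bExp, chi]
  · have h1 : ∀ x : Fin n → Bool, chi S x = ∏ i, (if i ∈ S then bsign (x i) else 1) := by
      intro x; simp [chi, Finset.prod_ite_mem]
    unfold bExp
    simp only [h1]
    rw [← Fintype.prod_sum (fun i (b : Bool) => if i ∈ S then bsign b else (1:ℝ))]
    obtain ⟨i, hi⟩ := Finset.nonempty_iff_ne_empty.2 h
    rw [Finset.prod_eq_zero (Finset.mem_univ i), zero_div]
    simp [hi, bsign]

lemma aux_chi_mul (n : ℕ) (S : Finset (Fin n)) (i : Fin n) (x : Fin n → Bool) :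
    chi S x * bsign (x i) = chi (if i ∈ S then S.erase i else insert i S) x := by
  unfold chi
  split_ifs with h
  · rw [← Finset.mul_prod_erase S _ h, mul_right_comm, ← sq, aux_bsign_sq, one_mul]
  · rw [Finset.prod_insert h, mul_comm]

lemma aux_comb (n : ℕ) (T : Finset (Fin n)) (p : ℕ) : ∀ S : Finset (Fin n),
    0 ≤ bExp n (fun x => chi S x * (∑ i ∈ T, bsign (x i) + 1) ^ p) ∧
    (p < S.card → bExp n (fun x => chi S x * (∑ i ∈ T, bsign (x i) + 1) ^ p) = 0) ∧
    (S.card ≤ p → S ⊆ T →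
      1 ≤ bExp n (fun x => chi S x * (∑ i ∈ T, bsign (x i) + 1) ^ p)) := by
  induction p with
  | zero =>
    intro S
    simp only [pow_zero, mul_one, aux_bExp_chi]
    refine ⟨by split_ifs <;> norm_num, fun h => ?_, fun h _ => ?_⟩
    · rw [if_neg]; rintro rfl; simp at h
    · rw [if_pos (Finset.card_eq_zero.1 (Nat.le_zero.1 h))]
  | succ p ih =>
    intro S
    have hrec : bExp n (fun x => chi S x * (∑ i ∈ T, bsign (x i) + 1) ^ (p + 1)) =
        ∑ i ∈ T, bExp n (fun x => chi (if i ∈ S then S.erase i else insert i S) x *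
          (∑ i ∈ T, bsign (x i) + 1) ^ p) +
        bExp n (fun x => chi S x * (∑ i ∈ T, bsign (x i) + 1) ^ p) := by
      rw [← aux_bExp_sum, ← aux_bExp_add]
      congr 1
      funext x
      simp only [← aux_chi_mul]
      rw [← Finset.sum_mul, ← Finset.mul_sum]
      ring
    rw [hrec]
    have hsum : 0 ≤ ∑ i ∈ T, bExp n (fun x => chi (if i ∈ S then S.erase i else insert i S) x *
          (∑ i ∈ T, bsign (x i) + 1) ^ p) := Finset.sum_nonneg fun i _ => (ih _).1
    refine ⟨add_nonneg hsum (ih S).1, fun h => ?_, fun h hST => ?_⟩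
    · rw [(ih S).2.1 (by omega), Finset.sum_eq_zero, add_zero]
      intro i _
      apply (ih _).2.1
      split_ifs with hi
      · rw [Finset.card_erase_of_mem hi]; omega
      · rw [Finset.card_insert_of_notMem hi]; omega
    · rcases Nat.lt_or_ge p S.card with hp | hp
      · have hS : S.Nonempty := by rw [← Finset.card_pos]; omega
        obtain ⟨i, hi⟩ := hS
        have h1 := Finset.single_le_sum (f := fun i =>
          bExp n (fun x => chi (if i ∈ S then S.erase i else insert i S) x *
          (∑ i ∈ T, bsign (x i) + 1) ^ p)) (fun i _ => (ih _).1) (hST hi)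
        have h2 := (ih (S.erase i)).2.2 (by rw [Finset.card_erase_of_mem hi]; omega)
          ((Finset.erase_subset _ _).trans hST)
        simp only [if_pos hi] at h1
        linarith [(ih S).1]
      · linarith [(ih S).2.2 hp hST]

lemma aux_asym (f : ℝ → ℝ) (hf : ContDiff ℝ ⊤ f) (k p0 : ℕ) (hk : k ≤ p0)
    (hne : iteratedDeriv p0 f 0 ≠ 0) (hz : ∀ p, k ≤ p → p < p0 → iteratedDeriv p f 0 = 0) :
    ∃ c > 0, ∃ δ > 0, ∀ h : ℝ, 0 < h → h < δ → ∀ n : ℕ, k + 1 ≤ n →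
      c * h ^ p0 ≤ |bExp n (fun x => monomial n k x *
        f (h * (∑ i ∈ Finset.univ.filter (fun i : Fin n => (i : ℕ) < k + 1), bsign (x i) + 1)))| := by
  set a : ℕ → ℝ := fun p => iteratedDeriv p f 0 / (p.factorial : ℝ) with ha
  have ha0 : a p0 ≠ 0 := div_ne_zero hne (by positivity)
  set R : ℝ → ℝ := fun y => f y - ∑ p ∈ Finset.range (p0 + 1), a p * y ^ p with hR
  have hfR : ∀ y, f y = ∑ p ∈ Finset.range (p0 + 1), a p * y ^ p + R y := by
    intro y; rw [hR]; ring
  have hlo : R =o[nhds 0] fun y : ℝ => y ^ p0 := by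
    have h := taylor_isLittleO_univ (f := f) (x₀ := 0) (n := p0) (hf.of_le le_top)
    simp only [sub_zero] at h
    refine h.congr_left fun y => ?_
    rw [taylor_within_apply]
    congr 1
    refine Finset.sum_congr rfl fun p _ => ?_
    simp only [iteratedDerivWithin_univ, smul_eq_mul, sub_zero, ha]
    rw [div_eq_mul_inv]
    ring
  set ε : ℝ := |a p0| / (2 * (k + 2) ^ p0) with hε
  have hεpos : 0 < ε := by have := abs_pos.2 ha0; positivity
  have hev := hlo.def hεpos
  obtain ⟨δ, hδ, hball⟩ := Metric.eventually_nhds_iff.1 hev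
  refine ⟨|a p0| / 2, by have := abs_pos.2 ha0; positivity, δ / (k + 2), by positivity, ?_⟩
  intro h hh0 hhδ n hn
  set T := Finset.univ.filter (fun i : Fin n => (i : ℕ) < k + 1) with hT
  set S := Finset.univ.filter (fun i : Fin n => (i : ℕ) < k) with hS
  have hcT : T.card = k + 1 := by rw [hT, Fin.card_filter_val_lt]; omega
  have hcS : S.card = k := by rw [hS, Fin.card_filter_val_lt]; omega
  have hST : S ⊆ T := by
    intro i hi
    simp only [hS, hT, Finset.mem_filter, Finset.mem_univ, true_and] at hi ⊢; omega
  have hbabs : ∀ b, |bsign b| = 1 := by intro b; cases b <;> simp [bsign]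
  set s : (Fin n → Bool) → ℝ := fun x => ∑ i ∈ T, bsign (x i) + 1 with hs
  have hsabs : ∀ x, |s x| ≤ k + 2 := by
    intro x
    refine (abs_add_le _ _).trans ?_
    have := Finset.abs_sum_le_sum_abs (fun i => bsign (x i)) T
    simp only [hbabs, Finset.sum_const, hcT, nsmul_eq_mul, mul_one] at this
    push_cast at this
    rw [abs_one]; linarith
  have hmon : ∀ x, monomial n k x = chi S x := fun x => rfl
  have hmabs : ∀ x, |chi S x| = 1 := by
    intro x; simp [chi, Finset.abs_prod, hbabs]
  have hdec : bExp n (fun x => monomial n k x * f (h * s x)) =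
      a p0 * h ^ p0 * bExp n (fun x => chi S x * (s x) ^ p0) +
        bExp n (fun x => chi S x * R (h * s x)) := by
    have : (fun x => monomial n k x * f (h * s x)) = fun x =>
        (∑ p ∈ Finset.range (p0 + 1), (a p * h ^ p) * (chi S x * (s x) ^ p)) +
          chi S x * R (h * s x) := by
      funext x
      rw [hmon, hfR, mul_add, Finset.mul_sum]
      congr 1
      refine Finset.sum_congr rfl fun p _ => ?_
      rw [mul_pow]; ring
    rw [this, aux_bExp_add, aux_bExp_sum]
    congr 1
    simp only [aux_bExp_const_mul]
    rw [Finset.sum_eq_single p0]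
    · intro p hp hpne
      have hplt : p < p0 := by
        have := Finset.mem_range.1 hp; omega
      rcases Nat.lt_or_ge p k with h1 | h1
      · rw [(aux_comb n T p S).2.1 (by omega), mul_zero]
      · simp [ha, hz p h1 hplt]
    · intro h; simp at h
  rw [hdec]
  have hA := (aux_comb n T p0 S).2.2 (by omega) hST
  have hRb : |bExp n (fun x => chi S x * R (h * s x))| ≤ |a p0| / 2 * h ^ p0 := by
    apply aux_bExp_abs_le
    intro x
    rw [abs_mul, hmabs, one_mul]
    have habs : |h * s x| ≤ h * (k + 2) := by
      rw [abs_mul, abs_of_pos hh0]; exact mul_le_mul_of_nonneg_left (hsabs x) hh0.le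
    have hlt : h * (k + 2) < δ := by rwa [lt_div_iff₀ (by positivity)] at hhδ
    have h1 := hball (y := h * s x) (by rw [Real.dist_eq, sub_zero]; linarith)
    rw [Real.norm_eq_abs, Real.norm_eq_abs, abs_pow] at h1
    refine h1.trans ?_
    calc ε * |h * s x| ^ p0 ≤ ε * (h * (k + 2)) ^ p0 := by gcongr
      _ = |a p0| / 2 * h ^ p0 := by rw [hε, mul_pow]; field_simp
  have hmain : |a p0| * h ^ p0 ≤ |a p0 * h ^ p0 * bExp n (fun x => chi S x * (s x) ^ p0)| := by
    rw [abs_mul, abs_mul, abs_of_pos (pow_pos hh0 p0)]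
    exact le_mul_of_one_le_right (by positivity) (hA.trans (le_abs_self _))
  have := abs_sub_abs_le_abs_sub (a p0 * h ^ p0 * bExp n (fun x => chi S x * (s x) ^ p0))
    (-bExp n (fun x => chi S x * R (h * s x)))
  rw [abs_neg, sub_neg_eq_add] at this
  linarith

lemma aux_memF (σ : ℝ → ℝ) (hm : Measurable σ) (hb : PolyBounded σ) (n : ℕ)
    (M : (Fin n → Bool) → ℝ) (m : Fin n → ℝ) (v : Fin n → ℝ≥0) (c : ℝ) (w : ℝ≥0)
    (x : Fin n → Bool) :
    MemLp (fun θ : (Fin n → ℝ) × ℝ => M x * σ (∑ i, θ.1 i * bsign (x i) + θ.2)) 2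
      ((Measure.pi fun i => gaussianReal (m i) (v i)).prod (gaussianReal c w)) := by
  have h := aux_memLp σ hm hb (∑ i, m i * bsign (x i) + c) (∑ i, v i + w)
  rw [← aux_law] at h
  exact (h.comp_of_map (by fun_prop)).const_mul (M x)

lemma aux_memF' (σ : ℝ → ℝ) (hm : Measurable σ) (hb : PolyBounded σ) (n : ℕ)
    (M : (Fin n → Bool) → ℝ) (m : Fin n → ℝ) (v : Fin n → ℝ≥0) (c : ℝ) (w : ℝ≥0) :
    MemLp (fun θ : (Fin n → ℝ) × ℝ =>
        bExp n fun x => M x * σ (∑ i, θ.1 i * bsign (x i) + θ.2)) 2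
      ((Measure.pi fun i => gaussianReal (m i) (v i)).prod (gaussianReal c w)) := by
  unfold bExp
  simp only [div_eq_mul_inv]
  exact (memLp_finsetSum _ fun x _ => aux_memF σ hm hb n M m v c w x).mul_const _

lemma aux_meanF (σ : ℝ → ℝ) (hm : Measurable σ) (hb : PolyBounded σ) (n : ℕ)
    (M : (Fin n → Bool) → ℝ) (m : Fin n → ℝ) (v : Fin n → ℝ≥0) (c : ℝ) (w : ℝ≥0)
    (h1 : ∑ i, v i + w = 1) :
    ∫ θ : (Fin n → ℝ) × ℝ, (bExp n fun x => M x * σ (∑ i, θ.1 i * bsign (x i) + θ.2))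
      ∂((Measure.pi fun i => gaussianReal (m i) (v i)).prod (gaussianReal c w)) =
    bExp n fun x => M x * gsmooth σ 1 (∑ i, m i * bsign (x i) + c) := by
  unfold bExp
  rw [integral_div, integral_finsetSum _ fun x _ =>
    (aux_memF σ hm hb n M m v c w x).integrable (by norm_num)]
  congr 1
  refine Finset.sum_congr rfl fun x _ => ?_
  change _ = M x * gsmooth σ 1 (∑ i, m i * bsign (x i) + c)
  rw [integral_const_mul, ← aux_gsmooth_shift σ hm, ← h1, ← aux_law n m v c w x,
    integral_map (by fun_prop) hm.aestronglyMeasurable]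

lemma aux_lower (σ : ℝ → ℝ) (hm : Measurable σ) (hb : PolyBounded σ) (k : ℕ) :
    ∃ K : ℝ, 0 < K ∧ ∀ n : ℕ, k + 1 ≤ n →
      (bExp n (fun x => monomial n k x * gsmooth σ 1 (Real.sqrt ((n:ℝ)⁻¹) *
        (∑ i ∈ Finset.univ.filter (fun i : Fin n => (i : ℕ) < k + 1), bsign (x i) + 1)))) ^ 2
      ≤ K * INAL n (monomial n k) σ := by
  set s : ℝ≥0 := (k + 1) / (k + 2) with hs
  have hs0 : 0 < s := by positivity
  have hs1 : s < 1 := by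
    rw [hs, div_lt_one (by positivity)]
    exact add_lt_add_right (by norm_num) _
  obtain ⟨C, hC1, hC⟩ := aux_gauss_dom s hs0 hs1
  have hC0 : 0 < C := lt_of_lt_of_le one_pos hC1
  refine ⟨((C ^ (k + 1) * C : ℝ≥0) : ℝ), by positivity, ?_⟩
  intro n hn
  have hnpos : 0 < n := by omega
  set u : ℝ≥0 := (n : ℝ≥0)⁻¹ with hu
  have hupos : 0 < u := by positivity
  set h : ℝ := Real.sqrt ((n:ℝ)⁻¹) with hh
  have hh2 : h ^ 2 = u := by rw [hh, Real.sq_sqrt (by positivity), hu]; simp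
  set T := Finset.univ.filter (fun i : Fin n => (i : ℕ) < k + 1) with hT
  have hcT : T.card = k + 1 := by rw [hT, Fin.card_filter_val_lt]; omega
  set m : Fin n → ℝ := fun i => if (i : ℕ) < k + 1 then h else 0 with hmdef
  set v : Fin n → ℝ≥0 := fun i => if (i : ℕ) < k + 1 then s * u else u with hv
  have hvar : ∑ i, v i + s * u = 1 := by
    have e1 : ∑ i, v i = (k + 1) * (s * u) + ((n - (k + 1) : ℕ) : ℝ≥0) * u := by
      rw [hv, Finset.sum_ite]
      simp only [Finset.sum_const, nsmul_eq_mul]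
      have := Finset.card_filter_add_card_filter_not (s := (Finset.univ : Finset (Fin n)))
        (fun i : Fin n => (i : ℕ) < k + 1)
      rw [← hT, hcT, Finset.card_univ, Fintype.card_fin] at this
      rw [← hT, hcT, show (Finset.univ.filter fun i : Fin n => ¬ (i : ℕ) < k + 1).card
        = n - (k + 1) by omega]
      push_cast; ring
    rw [e1]
    have hn' : ((n - (k + 1) : ℕ) : ℝ≥0) + (k + 1) = n := by
      exact_mod_cast Nat.sub_add_cancel hn
    have e2 : ((k : ℝ≥0) + 1) * (s * u) + s * u = (k + 1) * u := by
      rw [hs]; field_simp; ring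
    calc _ = (((k : ℝ≥0) + 1) * (s * u) + s * u) + ((n - (k + 1) : ℕ) : ℝ≥0) * u := by ring
      _ = (((n - (k + 1) : ℕ) : ℝ≥0) + (k + 1)) * u := by rw [e2]; ring
      _ = 1 := by rw [hn', hu]; field_simp
  set ν := (Measure.pi fun i => gaussianReal (m i) (v i)).prod (gaussianReal h (s * u)) with hν
  have hdom : ν ≤ (C ^ (k + 1) * C) • initMeasure n := by
    have hpi := aux_pi_dom (fun _ : Fin n => gaussianReal 0 u)
      (fun i => gaussianReal (m i) (v i)) (fun i => if (i : ℕ) < k + 1 then C else 1)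
      (fun i => by split_ifs <;> simp [hC1]) (fun i => by
        simp only [hmdef, hv]
        split_ifs
        · exact hC u h hupos hh2
        · simp)
    have hprod : (∏ i : Fin n, if (i : ℕ) < k + 1 then C else 1) = C ^ (k + 1) := by
      rw [Finset.prod_ite, Finset.prod_const, Finset.prod_const_one, mul_one, ← hT, hcT]
    rw [hprod] at hpi
    refine (Measure.prod_mono hpi (hC u h hupos hh2)).trans (le_of_eq ?_)
    simp only [initMeasure, ← hu]
    rw [Measure.prod_smul_left, Measure.prod_smul_right, smul_smul]
  set F : (Fin n → ℝ) × ℝ → ℝ := fun θ =>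
    bExp n fun x => monomial n k x * σ (∑ i, θ.1 i * bsign (x i) + θ.2) with hF
  have hFν : MemLp F 2 ν := aux_memF' σ hm hb n _ m v h (s * u)
  have hFμ : MemLp F 2 (initMeasure n) :=
    aux_memF' σ hm hb n _ (fun _ => 0) (fun _ => u) 0 u
  have hmean := aux_meanF σ hm hb n (monomial n k) m v h (s * u) hvar
  have hEq : ∀ x : Fin n → Bool, ∑ i, m i * bsign (x i) + h = h * (∑ i ∈ T, bsign (x i) + 1) := by
    intro x
    rw [mul_add, mul_one, Finset.mul_sum, hT, Finset.sum_filter]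
    congr 1
    refine Finset.sum_congr rfl fun i _ => ?_
    simp only [hmdef]; split_ifs <;> simp
  simp only [hEq] at hmean
  rw [← hmean]
  have hvn := variance_nonneg F ν
  rw [variance_eq_sub hFν] at hvn
  have h1 : (∫ θ, F θ ∂ν) ^ 2 ≤ ∫ θ, F θ ^ 2 ∂ν := by
    have : (∫ θ, F θ ^ 2 ∂ν) = ∫ θ, (F ^ 2) θ ∂ν := rfl
    rw [this]; linarith
  have h2 : ∫ θ, F θ ^ 2 ∂ν ≤ ∫ θ, F θ ^ 2 ∂((C ^ (k + 1) * C) • initMeasure n) := by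
    refine integral_mono_measure hdom (Eventually.of_forall fun θ => sq_nonneg _) ?_
    exact hFμ.integrable_sq.smul_measure_nnreal
  rw [integral_smul_nnreal_measure] at h2
  exact h1.trans h2

/-- For expressive `σ`, every `k ≥ 0` and every `P ≥ k` with
`Σ^{(P)}(0) ≠ 0` (where `Σ` is the Gaussian smoothing of `σ`), it holds that
`INAL(M_k, σ) = Ω(n^{-P})` as `n → ∞`. -/
theorem inal_monomial_lower_bound
    (σ : ℝ → ℝ) (hσ : Expressive σ) (k P : ℕ) (hkP : k ≤ P)
    (hP : iteratedDeriv P (gsmooth σ 1) 0 ≠ 0) :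
    (fun n : ℕ => ((n : ℝ) ^ P)⁻¹) =O[atTop]
      fun n : ℕ => INAL n (monomial n k) σ := by
  classical
  obtain ⟨hm, hb, -⟩ := hσ
  have hex : ∃ p, k ≤ p ∧ iteratedDeriv p (gsmooth σ 1) 0 ≠ 0 := ⟨P, hkP, hP⟩
  set p0 := Nat.find hex with hp0
  obtain ⟨hk0, hne⟩ := Nat.find_spec hex
  have hp0P : p0 ≤ P := Nat.find_min' hex ⟨hkP, hP⟩
  have hz : ∀ p, k ≤ p → p < p0 → iteratedDeriv p (gsmooth σ 1) 0 = 0 := by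
    intro p h1 h2
    by_contra h3
    exact Nat.find_min hex h2 ⟨h1, h3⟩
  obtain ⟨c, hc, δ, hδ, has⟩ := aux_asym (gsmooth σ 1) (aux_contDiff σ hm hb) k p0 hk0 hne hz
  obtain ⟨K, hK, hlow⟩ := aux_lower σ hm hb k
  have htend : Tendsto (fun n : ℕ => Real.sqrt ((n:ℝ)⁻¹)) atTop (nhds 0) := by
    have := (Real.continuous_sqrt.tendsto 0).comp (tendsto_inv_atTop_nhds_zero_nat (𝕜 := ℝ))
    simpa [Function.comp_def] using this
  refine IsBigO.of_bound (K / c ^ 2) ?_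
  filter_upwards [htend.eventually (gt_mem_nhds hδ), eventually_ge_atTop (k + 1)] with n hnδ hn
  have hnpos : (0:ℝ) < n := by exact_mod_cast (by omega : 0 < n)
  have hn1 : (1:ℝ) ≤ n := by exact_mod_cast (by omega : 1 ≤ n)
  have hhpos : 0 < Real.sqrt ((n:ℝ)⁻¹) := Real.sqrt_pos.2 (by positivity)
  have h1 := has _ hhpos hnδ n hn
  have h2 := hlow n hn
  have h3 := pow_le_pow_left₀ (by positivity) h1 2
  rw [sq_abs] at h3
  have h4 := h3.trans h2
  have h5 : (c * Real.sqrt ((n:ℝ)⁻¹) ^ p0) ^ 2 = c ^ 2 * ((n:ℝ) ^ p0)⁻¹ := by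
    rw [mul_pow, ← pow_mul, mul_comm p0 2, pow_mul, Real.sq_sqrt (by positivity), inv_pow]
  rw [h5] at h4
  have h6 : ((n:ℝ) ^ P)⁻¹ ≤ ((n:ℝ) ^ p0)⁻¹ :=
    inv_anti₀ (by positivity) (pow_le_pow_right₀ hn1 hp0P)
  rw [Real.norm_eq_abs, Real.norm_eq_abs, abs_of_pos (by positivity)]
  have h7 : c ^ 2 * ((n:ℝ) ^ P)⁻¹ ≤ K * |INAL n (monomial n k) σ| :=
    (mul_le_mul_of_nonneg_left h6 (by positivity)).trans
      (h4.trans (mul_le_mul_of_nonneg_left (le_abs_self _) hK.le))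
  rw [div_mul_eq_mul_div, le_div_iff₀ (by positivity)]
  linarith
end
end

section
/- For any function f : {±1}^n → ℝ and any measurable polynomially bounded activation σ : ℝ → ℝ, the initial alignment decomposes along the Fourier basis: INAL(f, σ) = Σ_{T ⊆ [n]} f̂(T)² · INAL(M_T, σ), where f̂(T) = E_x[f(x)·M_T(x)] are the Fourier coefficients of f and M_T(x) = ∏_{i∈T} x_i. -/
open MeasureTheory ProbabilityTheory Filter Finset Asymptotics
open scoped NNReal ENNReal

noncomputable section

/-- Alignment of `f` with a neuron with parameters `θ`. -/
def alignA (n : ℕ) (f : (Fin n → Bool) → ℝ) (σ : ℝ → ℝ) (θ : (Fin n → ℝ) × ℝ) : ℝ :=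
  bExp n fun x => f x * σ (∑ i, θ.1 i * bsign (x i) + θ.2)

/-- Reflection of the `i`-th weight. -/
def reflW {n : ℕ} (i : Fin n) (θ : (Fin n → ℝ) × ℝ) : (Fin n → ℝ) × ℝ :=
  (fun j => (if j = i then (fun t : ℝ => -t) else id) (θ.1 j), θ.2)

/-- Flip of the `i`-th bit. -/
def flipB {n : ℕ} (i : Fin n) (x : Fin n → Bool) : Fin n → Bool :=
  fun j => if j = i then !(x j) else x j

instance initMeasure_prob (n : ℕ) : IsProbabilityMeasure (initMeasure n) := by
  unfold initMeasure; infer_instance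

lemma reflW_mp {n : ℕ} (i : Fin n) :
    MeasurePreserving (reflW i) (initMeasure n) (initMeasure n) := by
  unfold initMeasure
  have h1 := measurePreserving_pi (fun _ : Fin n => gaussianReal 0 (n : ℝ≥0)⁻¹)
    (fun _ : Fin n => gaussianReal 0 (n : ℝ≥0)⁻¹)
    (f := fun j => if j = i then (fun t : ℝ => -t) else id) (by
      intro j
      by_cases h : j = i
      · simp only [h, if_true]
        refine ⟨measurable_neg, ?_⟩
        simpa using gaussianReal_map_neg (μ := 0) (v := (n : ℝ≥0)⁻¹)
      · simp only [h, if_false]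
        exact MeasurePreserving.id _)
  exact h1.prod (MeasurePreserving.id _)

lemma flipB_invol {n : ℕ} (i : Fin n) : Function.Involutive (flipB i) := by
  intro x
  funext j
  by_cases h : j = i <;> simp [flipB, h]

lemma bsign_not (b : Bool) : bsign (!b) = - bsign b := by cases b <;> simp [bsign]

lemma chi_flipB {n : ℕ} (i : Fin n) (T : Finset (Fin n)) (x : Fin n → Bool) :
    chi T (flipB i x) = (if i ∈ T then -1 else 1) * chi T x := by
  have : ∀ j, bsign (flipB i x j) = (if j = i then -1 else 1) * bsign (x j) := by
    intro j
    by_cases h : j = i <;> simp [flipB, h, bsign_not]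
  unfold chi
  simp_rw [this]
  rw [Finset.prod_mul_distrib, Finset.prod_ite_eq']

lemma alignA_reflW {n : ℕ} (i : Fin n) (T : Finset (Fin n)) (σ : ℝ → ℝ)
    (θ : (Fin n → ℝ) × ℝ) :
    alignA n (chi T) σ (reflW i θ) = (if i ∈ T then -1 else 1) * alignA n (chi T) σ θ := by
  unfold alignA bExp
  rw [← mul_div_assoc]
  congr 1
  rw [← Equiv.sum_comp (flipB_invol i).toPerm, Finset.mul_sum]
  refine Finset.sum_congr rfl fun x _ => ?_
  have e : ∀ j, (reflW i θ).1 j * bsign (flipB i x j) = θ.1 j * bsign (x j) := by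
    intro j
    by_cases h : j = i <;> simp [flipB, reflW, h, bsign_not]
  simp only [Function.Involutive.coe_toPerm, chi_flipB, e]
  simp only [reflW]
  ring

lemma alignA_measurable (n : ℕ) (f : (Fin n → Bool) → ℝ) {σ : ℝ → ℝ} (h : Measurable σ) :
    Measurable (alignA n f σ) := by
  unfold alignA bExp
  fun_prop

lemma orth {n : ℕ} {σ : ℝ → ℝ} (h : Measurable σ) {S T : Finset (Fin n)} (hST : S ≠ T) :
    ∫ θ, alignA n (chi S) σ θ * alignA n (chi T) σ θ ∂ initMeasure n = 0 := by
  obtain ⟨i, hi⟩ : ∃ i, ¬ (i ∈ S ↔ i ∈ T) := by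
    by_contra hc
    push Not at hc
    exact hST (Finset.ext hc)
  have hm : Measurable fun θ => alignA n (chi S) σ θ * alignA n (chi T) σ θ :=
    (alignA_measurable n _ h).mul (alignA_measurable n _ h)
  have h1 : ∫ θ, alignA n (chi S) σ θ * alignA n (chi T) σ θ ∂ initMeasure n =
      ∫ θ, alignA n (chi S) σ (reflW i θ) * alignA n (chi T) σ (reflW i θ) ∂ initMeasure n := by
    conv_lhs => rw [← (reflW_mp i).map_eq]
    exact integral_map (reflW_mp i).aemeasurable hm.aestronglyMeasurable
  have h2 : ∀ θ, alignA n (chi S) σ (reflW i θ) * alignA n (chi T) σ (reflW i θ) =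
      - (alignA n (chi S) σ θ * alignA n (chi T) σ θ) := by
    intro θ
    rw [alignA_reflW, alignA_reflW]
    by_cases hS : i ∈ S <;> by_cases hT : i ∈ T <;> simp_all
  simp_rw [h2, integral_neg] at h1
  linarith

lemma chi_sum {n : ℕ} (x y : Fin n → Bool) :
    ∑ T : Finset (Fin n), chi T x * chi T y = if x = y then 2 ^ n else 0 := by
  have h := Finset.prod_one_add (f := fun i : Fin n => bsign (x i) * bsign (y i)) Finset.univ
  rw [Finset.powerset_univ] at h
  simp only [chi, ← Finset.prod_mul_distrib]
  rw [← h]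
  split_ifs with hxy
  · subst hxy
    have : ∀ b, 1 + bsign b * bsign b = 2 := by intro b; cases b <;> norm_num [bsign]
    simp [this]
  · obtain ⟨i, hi⟩ := Function.ne_iff.mp hxy
    refine Finset.prod_eq_zero (Finset.mem_univ i) ?_
    revert hi
    cases x i <;> cases y i <;> norm_num [bsign]

lemma fourier_inv {n : ℕ} (f : (Fin n → Bool) → ℝ) (x : Fin n → Bool) :
    f x = ∑ T : Finset (Fin n), fourierCoef n f T * chi T x := by
  unfold fourierCoef bExp
  simp_rw [div_mul_eq_mul_div, Finset.sum_mul]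
  rw [← Finset.sum_div, Finset.sum_comm]
  simp_rw [mul_assoc, ← Finset.mul_sum, chi_sum]
  simp

lemma alignA_decomp {n : ℕ} (f : (Fin n → Bool) → ℝ) (σ : ℝ → ℝ) (θ : (Fin n → ℝ) × ℝ) :
    alignA n f σ θ = ∑ T : Finset (Fin n), fourierCoef n f T * alignA n (chi T) σ θ := by
  unfold alignA
  conv_lhs => simp only [bExp]
  simp only [bExp, ← mul_div_assoc, Finset.mul_sum]
  rw [← Finset.sum_div, Finset.sum_comm]
  congr 1
  refine Finset.sum_congr rfl fun x _ => ?_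
  rw [fourier_inv f x, Finset.sum_mul]
  simp only [mul_assoc]

lemma alignA_memLp {n : ℕ} (f : (Fin n → Bool) → ℝ) {σ : ℝ → ℝ} (h : Measurable σ)
    (hpb : PolyBounded σ) : MemLp (alignA n f σ) 2 (initMeasure n) := by
  obtain ⟨C, hC, c, hc, hb⟩ := hpb
  have key : ∀ x : Fin n → Bool,
      MemLp (fun θ : (Fin n → ℝ) × ℝ => σ (∑ i, θ.1 i * bsign (x i) + θ.2)) 2
        (initMeasure n) := by
    intro x
    have hL : MemLp (fun θ : (Fin n → ℝ) × ℝ => ∑ i, θ.1 i * bsign (x i) + θ.2)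
        (2 * (c : ℝ≥0∞)) (initMeasure n) := by
      have hp : (2 * (c : ℝ≥0∞)) ≠ ∞ := ENNReal.mul_ne_top (by simp) (by simp)
      have hg := memLp_id_gaussianReal' (μ := 0) (v := (n : ℝ≥0)⁻¹) _ hp
      refine MemLp.add ?_ ?_
      · refine memLp_finsetSum _ fun i _ => ?_
        refine MemLp.mul_const ?_ _
        have := hg.comp_measurePreserving
          ((measurePreserving_eval (fun _ : Fin n => gaussianReal 0 (n : ℝ≥0)⁻¹) i).comp
            (measurePreserving_fst (ν := gaussianReal 0 (n : ℝ≥0)⁻¹)))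
        exact this
      · exact hg.comp_measurePreserving (measurePreserving_snd
          (μ := Measure.pi fun _ : Fin n => gaussianReal 0 (n : ℝ≥0)⁻¹))
    have hP := hL.norm_rpow_div (c : ℝ≥0∞)
    rw [ENNReal.mul_div_cancel_right (by simpa using hc.ne') (by simp)] at hP
    simp only [ENNReal.toReal_natCast, Real.rpow_natCast] at hP
    refine ((hP.const_mul C).add (memLp_const C)).of_le ?_ ?_
    · exact Measurable.aestronglyMeasurable (by fun_prop)
    · refine Filter.Eventually.of_forall fun θ => ?_
      exact (hb _).trans (le_abs_self _)
  have := (memLp_finsetSum Finset.univ fun x _ => (key x).const_mul (f x)).mul_const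
    ((2 ^ n : ℝ)⁻¹)
  simp only [← div_eq_mul_inv] at this
  exact this

/-- Fourier decomposition of the initial alignment:
`INAL(f, σ) = Σ_{T ⊆ [n]} f̂(T)² INAL(M_T, σ)`. -/
theorem inal_fourier_decomposition
    (n : ℕ) (f : (Fin n → Bool) → ℝ) (σ : ℝ → ℝ)
    (hmeas : Measurable σ) (hpb : PolyBounded σ) :
    INAL n f σ = ∑ T : Finset (Fin n), fourierCoef n f T ^ 2 * INAL n (chi T) σ := by
  have e : ∀ g, INAL n g σ = ∫ θ, alignA n g σ θ ^ 2 ∂ initMeasure n := fun g => rfl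
  have hi : ∀ S T : Finset (Fin n), Integrable (fun θ =>
      alignA n (chi S) σ θ * alignA n (chi T) σ θ) (initMeasure n) := fun S T =>
    (alignA_memLp (chi S) hmeas hpb).integrable_mul (alignA_memLp (chi T) hmeas hpb)
  have e2 : ∀ θ, alignA n f σ θ ^ 2 = ∑ S : Finset (Fin n), ∑ T : Finset (Fin n),
      fourierCoef n f S * fourierCoef n f T *
        (alignA n (chi S) σ θ * alignA n (chi T) σ θ) := by
    intro θ
    rw [alignA_decomp, sq, Finset.sum_mul_sum]
    refine Finset.sum_congr rfl fun S _ => Finset.sum_congr rfl fun T _ => ?_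
    ring
  rw [e]
  simp_rw [e2]
  rw [integral_finset_sum _ fun S _ => integrable_finset_sum _ fun T _ => (hi S T).const_mul _]
  refine Finset.sum_congr rfl fun S _ => ?_
  rw [integral_finset_sum _ fun T _ => (hi S T).const_mul _]
  rw [Finset.sum_eq_single S]
  · rw [integral_const_mul, e]
    simp only [sq]
  · intro T _ hT
    rw [integral_const_mul, orth hmeas (Ne.symm hT), mul_zero]
  · simp
end
end

section
/- Let ε > 0 and let (f_n) be a family of Boolean functions f_n : {±1}^n → {±1} such that for some universal constant c and every fixed k it holds that W^{≤k}(f_n) = O(n^{k-c}). Let f̄_n denote the N-extension of f_n for N = n^{1+ε}. Then CP(orb(f̄_n), U^N) = O(n^{-(ε/(1+ε))·c}). -/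
open MeasureTheory ProbabilityTheory Filter Finset Asymptotics
open scoped NNReal ENNReal

noncomputable section

lemma bsign_mul (a b : Bool) : 1 + bsign a * bsign b = if a = b then 2 else 0 := by
  cases a <;> cases b <;> norm_num [bsign]

lemma sum_chi {n : ℕ} (x y : Fin n → Bool) :
    ∑ S : Finset (Fin n), chi S x * chi S y = if x = y then 2 ^ n else 0 := by
  have h : ∑ S : Finset (Fin n), chi S x * chi S y
      = ∏ i, (1 + bsign (x i) * bsign (y i)) := by
    rw [Finset.prod_one_add]
    simp [chi, Finset.prod_mul_distrib]
  rw [h]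
  simp only [bsign_mul]
  split_ifs with hxy
  · subst hxy; simp
  · obtain ⟨i, hi⟩ := Function.ne_iff.mp hxy
    exact Finset.prod_eq_zero (Finset.mem_univ i) (by simp [hi])

lemma inversion {n : ℕ} (f : (Fin n → Bool) → ℝ) (x : Fin n → Bool) :
    f x = ∑ S : Finset (Fin n), fourierCoef n f S * chi S x := by
  have h : ∀ S : Finset (Fin n), fourierCoef n f S * chi S x
      = ∑ y, f y * (chi S y * chi S x) / 2 ^ n := by
    intro S
    simp only [fourierCoef, bExp]
    rw [Finset.sum_div, Finset.sum_mul]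
    refine Finset.sum_congr rfl fun y _ => ?_
    ring
  simp only [h]
  rw [Finset.sum_comm]
  simp only [← Finset.sum_div, ← Finset.mul_sum, sum_chi]
  simp

lemma parseval {n : ℕ} (f : (Fin n → Bool) → ℝ) (hf : IsBooleanFn f) :
    ∑ S : Finset (Fin n), fourierCoef n f S ^ 2 = 1 := by
  have h1 : bExp n (fun x => f x * f x) = 1 := by
    have : ∀ x, f x * f x = 1 := by
      intro x; rcases hf x with h | h <;> rw [h] <;> norm_num
    simp [bExp, this]
  have h2 : bExp n (fun x => f x * f x) = ∑ S : Finset (Fin n), fourierCoef n f S ^ 2 := by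
    have : ∀ x, f x * f x = ∑ S : Finset (Fin n), fourierCoef n f S * (f x * chi S x) := by
      intro x
      nth_rewrite 2 [inversion f x]
      rw [Finset.mul_sum]
      exact Finset.sum_congr rfl fun S _ => by ring
    simp only [bExp, this]
    rw [Finset.sum_comm, Finset.sum_div]
    refine Finset.sum_congr rfl fun S _ => ?_
    rw [← Finset.mul_sum, sq, mul_div_assoc]
    rfl
  rw [← h2, h1]

lemma chi_orth {N : ℕ} (S T : Finset (Fin N)) :
    bExp N (fun x => chi S x * chi T x) = if S = T then 1 else 0 := by
  have h : ∀ x : Fin N → Bool, chi S x * chi T x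
      = ∏ i, ((if i ∈ S then bsign (x i) else 1) * (if i ∈ T then bsign (x i) else 1)) := by
    intro x
    rw [Finset.prod_mul_distrib, Finset.prod_ite_mem, Finset.prod_ite_mem]
    simp [chi]
  simp only [bExp, h]
  rw [← Fintype.prod_sum (fun (i : Fin N) (b : Bool) =>
    (if i ∈ S then bsign b else 1) * (if i ∈ T then bsign b else 1))]
  split_ifs with hST
  · subst hST
    have : ∀ i : Fin N, ∑ b : Bool, ((if i ∈ S then bsign b else 1) *
        (if i ∈ S then bsign b else 1)) = 2 := by
      intro i
      by_cases hi : i ∈ S <;> simp [hi, bsign] <;> norm_num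
    rw [Finset.prod_congr rfl fun i _ => this i]
    simp
  · have : ∃ i, ¬ (i ∈ S ↔ i ∈ T) := by
      by_contra hh; push Not at hh; exact hST (Finset.ext hh)
    obtain ⟨i, hi⟩ := this
    rw [Finset.prod_eq_zero (Finset.mem_univ i), zero_div]
    by_cases h1 : i ∈ S <;> by_cases h2 : i ∈ T <;> simp_all [bsign]

lemma chi_comp {n N : ℕ} (a : Fin n ↪ Fin N) (S : Finset (Fin n)) (x : Fin N → Bool) :
    chi S (fun i => x (a i)) = chi (S.map a) x := by
  simp [chi]

lemma corr_eq {n N : ℕ} (f : (Fin n → Bool) → ℝ) (a b : Fin n ↪ Fin N) :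
    bExp N (fun x => f (fun i => x (a i)) * f (fun i => x (b i)))
      = ∑ p : Finset (Fin n) × Finset (Fin n),
        if p.1.map a = p.2.map b then fourierCoef n f p.1 * fourierCoef n f p.2 else 0 := by
  have h : ∀ x : Fin N → Bool, f (fun i => x (a i)) * f (fun i => x (b i))
      = ∑ p : Finset (Fin n) × Finset (Fin n), fourierCoef n f p.1 * fourierCoef n f p.2 *
        (chi (p.1.map a) x * chi (p.2.map b) x) := by
    intro x
    rw [inversion f (fun i => x (a i)), inversion f (fun i => x (b i)), Finset.sum_mul_sum,
      Fintype.sum_prod_type]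
    refine Finset.sum_congr rfl fun S _ => Finset.sum_congr rfl fun T _ => ?_
    rw [chi_comp, chi_comp]; ring
  simp only [bExp, h]
  rw [Finset.sum_comm, Finset.sum_div]
  refine Finset.sum_congr rfl fun p _ => ?_
  have := chi_orth (p.1.map a) (p.2.map b)
  rw [bExp] at this
  rw [← Finset.mul_sum, mul_div_assoc, this]
  simp

lemma corr_le {n N : ℕ} (f : (Fin n → Bool) → ℝ) (hf : IsBooleanFn f) (a b : Fin n ↪ Fin N) :
    (bExp N (fun x => f (fun i => x (a i)) * f (fun i => x (b i)))) ^ 2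
      ≤ ∑ S : Finset (Fin n), fourierCoef n f S ^ 2 *
        (if S.map a ⊆ Finset.univ.map b then 1 else 0) := by
  rw [corr_eq]
  set g := fourierCoef n f
  have hcs := Finset.sum_mul_sq_le_sq_mul_sq (Finset.univ : Finset (Finset (Fin n) × Finset (Fin n)))
    (fun p => if p.1.map a = p.2.map b then g p.1 else 0)
    (fun p => if p.1.map a = p.2.map b then g p.2 else 0)
  have e1 : ∀ p : Finset (Fin n) × Finset (Fin n),
      (if p.1.map a = p.2.map b then g p.1 * g p.2 else 0) =
      (if p.1.map a = p.2.map b then g p.1 else 0) *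
      (if p.1.map a = p.2.map b then g p.2 else 0) := by
    intro p; split_ifs <;> simp
  simp only [e1]
  refine hcs.trans ?_
  have h2 : ∑ p : Finset (Fin n) × Finset (Fin n),
      (if p.1.map a = p.2.map b then g p.2 else 0) ^ 2 ≤ 1 := by
    rw [← parseval f hf, Fintype.sum_prod_type_right]
    refine Finset.sum_le_sum fun T _ => ?_
    by_cases hT : ∃ S : Finset (Fin n), S.map a = T.map b
    · obtain ⟨S, hS⟩ := hT
      rw [Finset.sum_eq_single S]
      · simp [hS, g]
      · intro S' _ hne
        have : S'.map a ≠ T.map b := fun h => hne (Finset.map_injective a (h.trans hS.symm))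
        simp [this]
      · simp
    · push Not at hT
      simp [hT, sq_nonneg]
  have h1 : ∑ p : Finset (Fin n) × Finset (Fin n),
      (if p.1.map a = p.2.map b then g p.1 else 0) ^ 2 ≤
      ∑ S : Finset (Fin n), g S ^ 2 * (if S.map a ⊆ Finset.univ.map b then 1 else 0) := by
    rw [Fintype.sum_prod_type]
    refine Finset.sum_le_sum fun S _ => ?_
    by_cases hT : ∃ T : Finset (Fin n), S.map a = T.map b
    · obtain ⟨T, hS⟩ := hT
      have hsub : S.map a ⊆ Finset.univ.map b := by
        rw [hS]; exact Finset.map_subset_map.2 (Finset.subset_univ _)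
      rw [Finset.sum_eq_single T]
      · rw [if_pos hS, if_pos hsub, mul_one]
      · intro T' _ hne
        have : S.map a ≠ T'.map b := fun h => hne (Finset.map_injective b (h.symm.trans hS))
        simp [this]
      · simp
    · push Not at hT
      simp only [hT, if_false]
      simp only [ne_eq, OfNat.ofNat_ne_zero, not_false_eq_true, zero_pow, Finset.sum_const_zero]
      split_ifs <;> simp [sq_nonneg]
  calc _ ≤ _ * 1 := mul_le_mul_of_nonneg_left h2 (Finset.sum_nonneg fun _ _ => sq_nonneg _)
    _ ≤ _ := by rw [mul_one]; exact h1

lemma exists_perm_map {N : ℕ} (U V : Finset (Fin N)) (h : U.card = V.card) :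
    ∃ τ : Equiv.Perm (Fin N), U.map τ.toEmbedding = V := by
  have e : {x // x ∈ U} ≃ {x // x ∈ V} := Fintype.equivOfCardEq (by simpa using h)
  refine ⟨e.extendSubtype, ?_⟩
  apply Finset.eq_of_subset_of_card_le
  · intro y hy
    rw [Finset.mem_map] at hy
    obtain ⟨x, hx, rfl⟩ := hy
    exact Equiv.extendSubtype_mem e x hx
  · simp [h]

lemma desc_le (n N k : ℕ) (h : n ≤ N) :
    n.descFactorial k * N ^ k ≤ N.descFactorial k * n ^ k := by
  induction k with
  | zero => simp
  | succ k ih =>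
    rw [Nat.descFactorial_succ, Nat.descFactorial_succ]
    have h1 : (n - k) * N ≤ (N - k) * n := by
      rw [Nat.sub_mul, Nat.sub_mul, Nat.mul_comm N n]
      exact Nat.sub_le_sub_left (Nat.mul_le_mul_left k h) _
    calc (n - k) * n.descFactorial k * N ^ (k+1)
        = ((n - k) * N) * (n.descFactorial k * N ^ k) := by ring
      _ ≤ ((N - k) * n) * (N.descFactorial k * n ^ k) := Nat.mul_le_mul h1 ih
      _ = _ := by ring

lemma choose_le (n N k : ℕ) (h : n ≤ N) :
    n.choose k * N ^ k ≤ N.choose k * n ^ k := by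
  have := desc_le n N k h
  rw [Nat.descFactorial_eq_factorial_mul_choose, Nat.descFactorial_eq_factorial_mul_choose,
    mul_assoc, mul_assoc] at this
  exact Nat.le_of_mul_le_mul_left this (Nat.factorial_pos k)

lemma perm_count {N : ℕ} (hN : 0 < N) (U A : Finset (Fin N)) :
    ∑ π : Equiv.Perm (Fin N), (if U.map π.toEmbedding ⊆ A then (1:ℝ) else 0)
      ≤ Fintype.card (Equiv.Perm (Fin N)) * ((A.card : ℝ) / N) ^ U.card := by
  set q : Finset (Fin N) → ℝ := fun U =>
    ∑ π : Equiv.Perm (Fin N), (if U.map π.toEmbedding ⊆ A then (1:ℝ) else 0) with hq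
  have hinv : ∀ V ∈ Finset.powersetCard U.card (Finset.univ : Finset (Fin N)), q V = q U := by
    intro V hV
    obtain ⟨τ, hτ⟩ := exists_perm_map U V (Finset.mem_powersetCard.1 hV).2.symm
    simp only [hq]
    refine Fintype.sum_equiv (Equiv.mulRight τ) _ _ fun π => ?_
    rw [← hτ, Finset.map_map]
    rfl
  have hsum : ∑ V ∈ Finset.powersetCard U.card (Finset.univ : Finset (Fin N)), q V
      = Fintype.card (Equiv.Perm (Fin N)) * (A.card.choose U.card : ℝ) := by
    simp only [hq]
    rw [Finset.sum_comm]
    have : ∀ π : Equiv.Perm (Fin N),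
        ∑ V ∈ Finset.powersetCard U.card (Finset.univ : Finset (Fin N)),
          (if V.map π.toEmbedding ⊆ A then (1:ℝ) else 0) = (A.card.choose U.card : ℝ) := by
      intro π
      rw [Finset.sum_boole, ← Finset.card_powersetCard]
      congr 1
      refine Finset.card_bij (fun V _ => V.map π.toEmbedding) ?_ ?_ ?_
      · intro V hV
        simp only [Finset.mem_filter, Finset.mem_powersetCard] at hV ⊢
        exact ⟨hV.2, by simp [hV.1.2]⟩
      · intro V _ V' _ h
        exact Finset.map_injective _ h
      · intro W hW
        rw [Finset.mem_powersetCard] at hW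
        have hW2 : (W.map π.symm.toEmbedding).map π.toEmbedding = W := by
          ext; simp
        refine ⟨W.map π.symm.toEmbedding, ?_, hW2⟩
        rw [Finset.mem_filter, Finset.mem_powersetCard, hW2]
        exact ⟨⟨Finset.subset_univ _, by simp [hW.2]⟩, hW.1⟩
    simp only [this]
    simp
  rw [Finset.sum_congr rfl hinv, Finset.sum_const, Finset.card_powersetCard, nsmul_eq_mul] at hsum
  simp only [Finset.card_univ, Fintype.card_fin] at hsum
  change q U ≤ _
  have hA : A.card ≤ N := by simpa using Finset.card_le_univ A
  have hU : U.card ≤ N := by simpa using Finset.card_le_univ U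
  have hc : (0:ℝ) < (N.choose U.card : ℝ) := by exact_mod_cast Nat.choose_pos hU
  have hch : (A.card.choose U.card : ℝ) * (N:ℝ) ^ U.card ≤ N.choose U.card * (A.card : ℝ) ^ U.card := by
    exact_mod_cast choose_le A.card N U.card hA
  have hNp : (0:ℝ) < (N:ℝ) ^ U.card := by positivity
  refine le_of_mul_le_mul_left ?_ hc
  rw [hsum, div_pow, mul_left_comm]
  refine mul_le_mul_of_nonneg_left ?_ (by positivity)
  rw [← mul_div_assoc, le_div_iff₀ hNp]
  exact hch

lemma orbitCP_le {n N : ℕ} (hN : 0 < N) (hn : n ≤ N) (f : (Fin n → Bool) → ℝ)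
    (hf : IsBooleanFn f) :
    orbitCP N (extendFn n N f) ≤
      ∑ S : Finset (Fin n), fourierCoef n f S ^ 2 * ((n : ℝ) / N) ^ S.card := by
  set e := Fin.castLEEmb hn
  set P := (Fintype.card (Equiv.Perm (Fin N)) : ℝ) with hP
  have hPpos : 0 < P := by rw [hP]; exact_mod_cast Fintype.card_pos
  have hext : ∀ (π : Equiv.Perm (Fin N)) (x : Fin N → Bool),
      extendFn n N f (fun i => x (π i)) = f (fun i => x ((e.trans π.toEmbedding) i)) := by
    intro π x
    simp only [extendFn]
    congr 1
    funext i
    have : (i : ℕ) < N := i.2.trans_le hn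
    simp only [this, dif_pos]
    rfl
  rw [orbitCP, div_le_iff₀ (by positivity)]
  simp only [hext]
  rw [Finset.sum_comm]
  have key : ∀ π' : Equiv.Perm (Fin N), ∑ π : Equiv.Perm (Fin N),
      (bExp N fun x => f (fun i => x ((e.trans π.toEmbedding) i)) *
        f (fun i => x ((e.trans π'.toEmbedding) i))) ^ 2 ≤
      (∑ S : Finset (Fin n), fourierCoef n f S ^ 2 * ((n : ℝ) / N) ^ S.card) * P := by
    intro π'
    refine (Finset.sum_le_sum fun π _ => corr_le f hf _ _).trans ?_
    rw [Finset.sum_comm, Finset.sum_mul]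
    refine Finset.sum_le_sum fun S _ => ?_
    rw [← Finset.mul_sum, mul_assoc]
    refine mul_le_mul_of_nonneg_left ?_ (sq_nonneg _)
    have := perm_count hN (S.map e) (Finset.univ.map (e.trans π'.toEmbedding))
    simp only [Finset.card_map, Finset.card_univ, Fintype.card_fin, Finset.map_map] at this
    rw [mul_comm]
    simpa [hP, Fintype.card_perm] using this
  refine (Finset.sum_le_sum fun π' _ => key π').trans ?_
  rw [Finset.sum_const, nsmul_eq_mul, Finset.card_univ, ← hP]
  apply le_of_eq; ring

lemma split_le {n : ℕ} (K : ℕ) (r : ℝ) (h0 : 0 ≤ r) (h1 : r ≤ 1) (f : (Fin n → Bool) → ℝ)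
    (hf : IsBooleanFn f) :
    ∑ S : Finset (Fin n), fourierCoef n f S ^ 2 * r ^ S.card ≤
      ∑ k ∈ Finset.range K, weightLE n k f * r ^ k + r ^ K := by
  have hA : ∀ S : Finset (Fin n), fourierCoef n f S ^ 2 * r ^ S.card ≤
      ∑ k ∈ Finset.range K, (if S.card ≤ k then fourierCoef n f S ^ 2 else 0) * r ^ k
        + fourierCoef n f S ^ 2 * r ^ K := by
    intro S
    have hnn : ∀ k ∈ Finset.range K,
        0 ≤ (if S.card ≤ k then fourierCoef n f S ^ 2 else 0) * r ^ k := by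
      intro k _; split_ifs <;> positivity
    by_cases hS : S.card < K
    · have := Finset.single_le_sum hnn (Finset.mem_range.2 hS)
      simp only [le_refl, if_true] at this
      have h3 : 0 ≤ fourierCoef n f S ^ 2 * r ^ K := by positivity
      linarith
    · have h3 : r ^ S.card ≤ r ^ K := pow_le_pow_of_le_one h0 h1 (not_lt.1 hS)
      have h4 := mul_le_mul_of_nonneg_left h3 (sq_nonneg (fourierCoef n f S))
      have := Finset.sum_nonneg hnn
      linarith
  refine (Finset.sum_le_sum fun S _ => hA S).trans ?_
  rw [Finset.sum_add_distrib, ← Finset.sum_mul, parseval f hf, one_mul, Finset.sum_comm]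
  simp only [weightLE, Finset.sum_filter, Finset.sum_mul]
  exact le_refl _

/-- If for some universal `c` and every fixed `k`, `W^{≤k}(f_n) = O(n^{k-c})`,
then with `N = n^{1+ε}`, `CP(orb(f̄_n), U^N) = O(n^{-(ε/(1+ε))c})`. -/
theorem weight_bigO_implies_orbitCP_bigO
    (ε : ℝ) (hε : 0 < ε)
    (f : ∀ n : ℕ, (Fin n → Bool) → ℝ) (hf : ∀ n, IsBooleanFn (f n))
    (c : ℝ)
    (hW : ∀ k : ℕ,
      (fun n : ℕ => weightLE n k (f n)) =O[atTop] fun n : ℕ => (n : ℝ) ^ ((k : ℝ) - c)) :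
    (fun n : ℕ => orbitCP (Ndim ε n) (extendFn n (Ndim ε n) (f n))) =O[atTop]
      fun n : ℕ => (n : ℝ) ^ (-(ε / (1 + ε)) * c) := by
  set K := ⌈c⌉₊ with hK
  set t := -(ε / (1 + ε)) * c with ht
  have h1ε : 0 < 1 + ε := by linarith
  have hmain : (fun n : ℕ => orbitCP (Ndim ε n) (extendFn n (Ndim ε n) (f n))) =O[atTop]
      fun n : ℕ => ∑ k ∈ Finset.range K, weightLE n k (f n) * ((n : ℝ) ^ (-ε)) ^ k
        + ((n : ℝ) ^ (-ε)) ^ K := by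
    refine IsBigO.of_bound 1 ?_
    filter_upwards [eventually_ge_atTop 1] with n hn
    have hn1 : (1:ℝ) ≤ n := by exact_mod_cast hn
    have hn0 : (0:ℝ) < n := by linarith
    have hNr : (n:ℝ) ^ (1 + ε) ≤ Ndim ε n := Nat.le_ceil _
    have hnN : (n:ℝ) ≤ Ndim ε n := by
      refine le_trans ?_ hNr
      exact Real.self_le_rpow_of_one_le hn1 (by linarith)
    have hnN' : n ≤ Ndim ε n := by exact_mod_cast hnN
    have hN0 : 0 < Ndim ε n := by omega
    have hN0r : (0:ℝ) < Ndim ε n := by exact_mod_cast hN0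
    have hr : (n:ℝ) / Ndim ε n ≤ (n:ℝ) ^ (-ε) := by
      rw [div_le_iff₀ hN0r]
      calc (n:ℝ) = (n:ℝ) ^ (-ε) * (n:ℝ) ^ (1 + ε) := by
            rw [← Real.rpow_add hn0]; simp
        _ ≤ _ := mul_le_mul_of_nonneg_left hNr (by positivity)
    have hr1 : (n:ℝ) ^ (-ε) ≤ 1 := Real.rpow_le_one_of_one_le_of_nonpos hn1 (by linarith)
    have hb : orbitCP (Ndim ε n) (extendFn n (Ndim ε n) (f n)) ≤
        ∑ k ∈ Finset.range K, weightLE n k (f n) * ((n : ℝ) ^ (-ε)) ^ k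
        + ((n : ℝ) ^ (-ε)) ^ K := by
      refine (orbitCP_le hN0 hnN' (f n) (hf n)).trans ?_
      refine le_trans ?_ (split_le K _ (by positivity) hr1 (f n) (hf n))
      refine Finset.sum_le_sum fun S _ => ?_
      gcongr
    have hp : 0 ≤ orbitCP (Ndim ε n) (extendFn n (Ndim ε n) (f n)) := by
      unfold orbitCP; positivity
    rw [one_mul, Real.norm_of_nonneg hp, Real.norm_of_nonneg (hp.trans hb)]
    exact hb
  refine hmain.trans (IsBigO.add (IsBigO.fun_sum fun k hk => ?_) ?_)
  · have hkc : (k:ℝ) < c := Nat.lt_ceil.1 (Finset.mem_range.1 hk)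
    have hk0 : (0:ℝ) ≤ k := Nat.cast_nonneg k
    refine ((hW k).mul (isBigO_refl (fun n : ℕ => ((n : ℝ) ^ (-ε)) ^ k) atTop)).trans ?_
    refine IsBigO.of_bound 1 ?_
    filter_upwards [eventually_ge_atTop 1] with n hn
    have hn1 : (1:ℝ) ≤ n := by exact_mod_cast hn
    have hn0 : (0:ℝ) < n := by linarith
    rw [one_mul, Real.norm_of_nonneg (by positivity), Real.norm_of_nonneg (by positivity),
      ← Real.rpow_natCast, ← Real.rpow_mul hn0.le, ← Real.rpow_add hn0]
    refine Real.rpow_le_rpow_of_exponent_le hn1 ?_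
    have hte : t * (1 + ε) = - (ε * c) := by rw [ht]; field_simp
    refine le_of_mul_le_mul_right ?_ h1ε
    rw [hte]
    have hc : 0 < c := by linarith
    nlinarith [mul_nonneg (mul_nonneg hε.le hε.le) hk0]
  · refine IsBigO.of_bound 1 ?_
    filter_upwards [eventually_ge_atTop 1] with n hn
    have hn1 : (1:ℝ) ≤ n := by exact_mod_cast hn
    have hn0 : (0:ℝ) < n := by linarith
    rw [one_mul, Real.norm_of_nonneg (by positivity), Real.norm_of_nonneg (by positivity),
      ← Real.rpow_natCast, ← Real.rpow_mul hn0.le]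
    refine Real.rpow_le_rpow_of_exponent_le hn1 ?_
    have hte : t * (1 + ε) = - (ε * c) := by rw [ht]; field_simp
    refine le_of_mul_le_mul_right ?_ h1ε
    rw [hte]
    have hcK : c ≤ K := Nat.le_ceil c
    have hK0 : (0:ℝ) ≤ K := Nat.cast_nonneg K
    nlinarith [mul_nonneg (mul_nonneg hε.le hε.le) hK0, mul_le_mul_of_nonneg_left hcK hε.le]
end
end

section
/- Let σ : ℝ → ℝ be measurable and polynomially bounded. Then for every k ∈ ℕ and every v > 0, the k-th derivative Σ_v^{(k)} of the v-Gaussian smoothing Σ_v is polynomially bounded. Moreover, the bound can be taken uniform over v ∈ [1/2, 1]: for each k there exist constants C > 0 and ℓ ∈ ℕ (depending only on σ and k) such that |Σ_v^{(k)}(t)| ≤ C·t^{2ℓ} + C for every t ∈ ℝ and every 1/2 ≤ v ≤ 1. -/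
open MeasureTheory ProbabilityTheory Filter Finset Asymptotics
open scoped NNReal ENNReal

noncomputable section

lemma aux_int (m : ℕ) (b : ℝ) (hb : 0 < b) :
    Integrable (fun u : ℝ => (1 + |u|) ^ m * Real.exp (-b * u ^ 2)) := by
  have h1 := integrable_exp_neg_mul_sq hb
  have h2 : Integrable (fun u : ℝ => |u| ^ m * Real.exp (-b * u ^ 2)) := by
    have h := (integrable_rpow_mul_exp_neg_mul_sq hb (s := (m : ℝ))
      (by have : (0:ℝ) ≤ m := Nat.cast_nonneg m
          linarith)).norm
    refine h.congr (Eventually.of_forall fun u => ?_)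
    simp [Real.rpow_natCast]
  refine ((h1.add h2).const_mul (2 ^ (m - 1))).mono' (by fun_prop)
    (Eventually.of_forall fun u => ?_)
  have h3 := add_pow_le (zero_le_one) (abs_nonneg u) m
  rw [Real.norm_of_nonneg (by positivity)]
  calc _ ≤ (2 ^ (m - 1) * (1 ^ m + |u| ^ m)) * Real.exp (-b * u ^ 2) := by gcongr
    _ = _ := by simp only [Pi.add_apply, one_pow]; ring

/-- unnormalised kernel integrals -/
def FF (σ : ℝ → ℝ) (j : ℕ) (w t : ℝ) : ℝ :=
  ∫ x, σ x * (t - x) ^ j * Real.exp (-w * (t - x) ^ 2)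

/-- dominating function -/
def DD (B : ℝ) (c j : ℕ) (a b t x : ℝ) : ℝ :=
  B * (1 + |t|) ^ c * Real.exp b * ((1 + |t - x|) ^ (c + j) * Real.exp (-(a / 2) * (t - x) ^ 2))

lemma DD_int (B : ℝ) (c j : ℕ) (a b t : ℝ) (ha : 0 < a) : Integrable (DD B c j a b t) := by
  have h := (aux_int (c + j) (a / 2) (by positivity)).comp_sub_left t
  exact h.const_mul _

lemma DD_integral (B : ℝ) (c j : ℕ) (a b t : ℝ) :
    ∫ x, DD B c j a b t x = (B * Real.exp b *
      ∫ u : ℝ, (1 + |u|) ^ (c + j) * Real.exp (-(a / 2) * u ^ 2)) * (1 + |t|) ^ c := by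
  unfold DD
  rw [integral_const_mul,
    integral_sub_left_eq_self (fun u : ℝ => (1 + |u|) ^ (c + j) * Real.exp (-(a / 2) * u ^ 2))]
  ring

lemma dom (σ : ℝ → ℝ) (B : ℝ) (hB : 0 < B) (c : ℕ) (hσ : ∀ x, |σ x| ≤ B * (1 + |x|) ^ c)
    (j : ℕ) (a b w : ℝ) (ha : 0 < a) (haw : a ≤ w) (hwb : w ≤ b) (t s x : ℝ) (hst : |s - t| ≤ 1) :
    |σ x * (s - x) ^ j * Real.exp (-w * (s - x) ^ 2)| ≤ DD B c j a b t x := by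
  have hw : 0 < w := ha.trans_le haw
  have e1 : |σ x| ≤ B * ((1 + |t|) * (1 + |t - x|)) ^ c := by
    refine (hσ x).trans ?_
    gcongr
    have : |x| ≤ |t| + |t - x| := by
      have := abs_sub t (t - x)
      simpa using this
    nlinarith [abs_nonneg t, abs_nonneg (t - x), mul_nonneg (abs_nonneg t) (abs_nonneg (t - x))]
  have e2 : |s - x| ≤ 1 + |t - x| := by
    have := abs_add_le (s - t) (t - x)
    simp only [sub_add_sub_cancel] at this
    linarith
  have e3 : Real.exp (-w * (s - x) ^ 2) ≤ Real.exp b * Real.exp (-(a / 2) * (t - x) ^ 2) := by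
    rw [← Real.exp_add, Real.exp_le_exp]
    have h1 : (s - t) ^ 2 ≤ 1 := by
      rw [← sq_abs]; nlinarith [abs_nonneg (s - t)]
    have h2 : (t - x) ^ 2 / 2 - 1 ≤ (s - x) ^ 2 := by
      nlinarith [sq_nonneg ((s - x) + (s - t))]
    have h3 := mul_le_mul_of_nonneg_left h2 hw.le
    have h4 := mul_le_mul_of_nonneg_right haw (sq_nonneg (t - x))
    nlinarith
  rw [abs_mul, abs_mul, abs_pow, abs_of_pos (Real.exp_pos _)]
  calc _ ≤ (B * ((1 + |t|) * (1 + |t - x|)) ^ c) * (1 + |t - x|) ^ j *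
        (Real.exp b * Real.exp (-(a / 2) * (t - x) ^ 2)) := by gcongr
    _ = _ := by unfold DD; rw [mul_pow, pow_add]; ring

lemma FF_deriv (σ : ℝ → ℝ) (hm : Measurable σ) (B : ℝ) (hB : 0 < B) (c : ℕ)
    (hσ : ∀ x, |σ x| ≤ B * (1 + |x|) ^ c) (j : ℕ) (w : ℝ) (hw : 0 < w) (t : ℝ) :
    HasDerivAt (FF σ j w) (j * FF σ (j - 1) w t - 2 * w * FF σ (j + 1) w t) t := by
  have hint : ∀ i, Integrable (fun x => σ x * (t - x) ^ i * Real.exp (-w * (t - x) ^ 2)) := by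
    intro i
    exact (DD_int B c i w w t hw).mono' (by fun_prop) (Eventually.of_forall fun x =>
      dom σ B hB c hσ i w w w hw le_rfl le_rfl t t x (by simp))
  have key := hasDerivAt_integral_of_dominated_loc_of_deriv_le (μ := volume) (x₀ := t)
    (F := fun s x => σ x * (s - x) ^ j * Real.exp (-w * (s - x) ^ 2))
    (F' := fun s x => j * (σ x * (s - x) ^ (j - 1) * Real.exp (-w * (s - x) ^ 2))
      - 2 * w * (σ x * (s - x) ^ (j + 1) * Real.exp (-w * (s - x) ^ 2)))
    (bound := fun x => j * DD B c (j - 1) w w t x + 2 * w * DD B c (j + 1) w w t x)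
    (s := Metric.ball t 1) (Metric.ball_mem_nhds t one_pos)
    (Eventually.of_forall fun s => by fun_prop) (hint j) (by fun_prop)
    (Eventually.of_forall fun x s hs => by
      have hs' : |s - t| ≤ 1 := by
        have := Metric.mem_ball.1 hs
        rw [Real.dist_eq] at this; exact this.le
      have d1 := dom σ B hB c hσ (j - 1) w w w hw le_rfl le_rfl t s x hs'
      have d2 := dom σ B hB c hσ (j + 1) w w w hw le_rfl le_rfl t s x hs'
      refine (norm_sub_le _ _).trans ?_
      rw [norm_mul, norm_mul (2 * w), Real.norm_of_nonneg (Nat.cast_nonneg j),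
        Real.norm_of_nonneg (by positivity : 0 ≤ 2 * w), Real.norm_eq_abs, Real.norm_eq_abs]
      gcongr)
    (((DD_int B c _ w w t hw).const_mul _).add ((DD_int B c _ w w t hw).const_mul _))
    (Eventually.of_forall fun x s hs => by
      have h0 : HasDerivAt (fun s : ℝ => s - x) 1 s := (hasDerivAt_id s).sub_const x
      have h1 := (h0.pow j).const_mul (σ x)
      have h2 := ((h0.pow 2).const_mul (-w)).exp
      refine (h1.mul h2).congr_deriv ?_
      simp only [Pi.pow_apply]
      push_cast
      ring)
  refine key.2.congr_deriv ?_
  rw [integral_sub ((hint _).const_mul _) ((hint _).const_mul _), integral_const_mul,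
    integral_const_mul]
  rfl

lemma FF_contDiff (σ : ℝ → ℝ) (hm : Measurable σ) (B : ℝ) (hB : 0 < B) (c : ℕ)
    (hσ : ∀ x, |σ x| ≤ B * (1 + |x|) ^ c) (w : ℝ) (hw : 0 < w) (n : ℕ) :
    ∀ j, ContDiff ℝ n (FF σ j w) := by
  have hd := fun j => FF_deriv σ hm B hB c hσ j w hw
  induction n with
  | zero =>
    intro j
    exact contDiff_zero.2 (continuous_iff_continuousAt.2 fun t => (hd j t).continuousAt)
  | succ n ih =>
    intro j
    rw [show ((n + 1 : ℕ) : WithTop ℕ∞) = (n : WithTop ℕ∞) + 1 by push_cast; rfl,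
      contDiff_succ_iff_deriv]
    refine ⟨fun t => (hd j t).differentiableAt, by simp, ?_⟩
    rw [funext fun t => (hd j t).deriv]
    exact (contDiff_const.mul (ih _)).sub (contDiff_const.mul (ih _))

lemma FF_bound (σ : ℝ → ℝ) (hm : Measurable σ) (B : ℝ) (hB : 0 < B) (c : ℕ)
    (hσ : ∀ x, |σ x| ≤ B * (1 + |x|) ^ c) (a b : ℝ) (ha : 0 < a) (k : ℕ) :
    ∀ j, ∃ A : ℝ, 0 ≤ A ∧ ∃ l : ℕ, ∀ w, a ≤ w → w ≤ b → ∀ t,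
      |iteratedDeriv k (FF σ j w) t| ≤ A * (1 + |t|) ^ l := by
  induction k with
  | zero =>
    intro j
    refine ⟨B * Real.exp b *
      ∫ u : ℝ, (1 + |u|) ^ (c + j) * Real.exp (-(a / 2) * u ^ 2), ?_, c, fun w haw hwb t => ?_⟩
    rotate_left
    · rw [iteratedDeriv_zero, ← DD_integral B c j a b t]
      unfold FF
      rw [← Real.norm_eq_abs]
      exact norm_integral_le_of_norm_le (DD_int B c j a b t ha)
        (Eventually.of_forall fun x => dom σ B hB c hσ j a b w ha haw hwb t t x (by simp))
    · exact mul_nonneg (by positivity) (integral_nonneg fun u => by positivity)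
  | succ k ih =>
    intro j
    obtain ⟨A, hA, l, h⟩ := ih (j - 1)
    obtain ⟨A', hA', l', h'⟩ := ih (j + 1)
    refine ⟨j * A + 2 * |b| * A', by positivity, l + l', fun w haw hwb t => ?_⟩
    have hw : 0 < w := ha.trans_le haw
    have hc := fun j => (FF_contDiff σ hm B hB c hσ w hw k j).contDiffAt (x := t)
    rw [iteratedDeriv_succ', funext fun t => (FF_deriv σ hm B hB c hσ j w hw t).deriv]
    have e : iteratedDeriv k (fun t => j * FF σ (j - 1) w t - 2 * w * FF σ (j + 1) w t) t =
        j * iteratedDeriv k (FF σ (j - 1) w) t - 2 * w * iteratedDeriv k (FF σ (j + 1) w) t := by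
      rw [iteratedDeriv_fun_sub (contDiffAt_const.mul (hc _)) (contDiffAt_const.mul (hc _)),
        iteratedDeriv_const_mul_field, iteratedDeriv_const_mul_field]
    rw [e]
    have h1 := h w haw hwb t
    have h2 := h' w haw hwb t
    have ht : 1 ≤ 1 + |t| := by linarith [abs_nonneg t]
    have p1 : (1 + |t|) ^ l ≤ (1 + |t|) ^ (l + l') := pow_le_pow_right₀ ht (by omega)
    have p2 : (1 + |t|) ^ l' ≤ (1 + |t|) ^ (l + l') := pow_le_pow_right₀ ht (by omega)
    have hb : w ≤ |b| := hwb.trans (le_abs_self b)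
    refine (abs_sub _ _).trans ?_
    rw [abs_mul, abs_mul (2 * w), abs_of_nonneg (Nat.cast_nonneg j : (0:ℝ) ≤ j),
      abs_of_pos (by positivity : 0 < 2 * w)]
    calc _ ≤ j * (A * (1 + |t|) ^ (l + l')) + 2 * |b| * (A' * (1 + |t|) ^ (l + l')) := by
          gcongr
          · exact h1.trans (by gcongr)
          · exact h2.trans (by gcongr)
      _ = _ := by ring

lemma gsmooth_eq (σ : ℝ → ℝ) (v : ℝ) (hv : 0 < v) :
    gsmooth σ v = fun t => (√(2 * Real.pi * v))⁻¹ * FF σ 0 (1 / (2 * v)) t := by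
  funext t
  unfold gsmooth FF
  rw [integral_gaussianReal_eq_integral_smul (by simpa using hv),
    ← integral_const_mul, ← integral_sub_right_eq_self _ t]
  congr 1
  funext x
  simp only [gaussianPDFReal, Real.coe_toNNReal v hv.le, smul_eq_mul, sub_add_cancel, pow_zero]
  rw [show -(x - t - 0) ^ 2 / (2 * v) = -(1 / (2 * v)) * (t - x) ^ 2 by ring]
  ring

lemma gs_bound (σ : ℝ → ℝ) (hm : Measurable σ) (hpb : PolyBounded σ) (k : ℕ)
    (a b : ℝ) (ha : 0 < a) :
    ∃ C : ℝ, 0 < C ∧ ∃ l : ℕ, ∀ t v : ℝ, a ≤ v → v ≤ b →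
      |iteratedDeriv k (gsmooth σ v) t| ≤ C * |t| ^ l + C := by
  obtain ⟨C, hC, c, -, h⟩ := hpb
  have hσ : ∀ x, |σ x| ≤ (2 * C) * (1 + |x|) ^ c := fun x => by
    have h1 : |x| ^ c ≤ (1 + |x|) ^ c := by gcongr; linarith
    have h2 : 1 ≤ (1 + |x|) ^ c := one_le_pow₀ (by linarith [abs_nonneg x])
    nlinarith [h x]
  by_cases hab : a ≤ b
  swap
  · exact ⟨1, one_pos, 0, fun t v h1 h2 => absurd (h1.trans h2) hab⟩
  have hb : 0 < b := ha.trans_le hab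
  obtain ⟨A, hA, l, H⟩ := FF_bound σ hm (2 * C) (by positivity) c hσ (1 / (2 * b)) (1 / (2 * a))
    (by positivity) k 0
  set M := (√(2 * Real.pi * a))⁻¹ with hM
  have hM0 : 0 ≤ M := by positivity
  refine ⟨M * A * 2 ^ (l - 1) + 1, by positivity, l, fun t v hav hvb => ?_⟩
  have hv : 0 < v := ha.trans_le hav
  rw [gsmooth_eq σ v hv, iteratedDeriv_const_mul_field, abs_mul, abs_of_nonneg (by positivity)]
  have h1 := H (1 / (2 * v)) (by gcongr) (by gcongr) t
  have h2 : (√(2 * Real.pi * v))⁻¹ ≤ M := by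
    rw [hM]; gcongr
  have h3 := add_pow_le (zero_le_one) (abs_nonneg t) l
  rw [one_pow] at h3
  calc _ ≤ M * (A * (2 ^ (l - 1) * (1 + |t| ^ l))) := by
        gcongr
        exact h1.trans (by gcongr)
    _ ≤ M * (A * (2 ^ (l - 1) * (1 + |t| ^ l))) + (1 + |t| ^ l) :=
        le_add_of_nonneg_right (by positivity)
    _ = _ := by ring

/-- For measurable, polynomially bounded `σ`, every derivative
`Σ_v^{(k)}` of the `v`-Gaussian smoothing is polynomially bounded; moreover the bound
can be taken uniform over `v ∈ [1/2, 1]`: `|Σ_v^{(k)}(t)| ≤ C t^{2ℓ} + C`. -/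
theorem gsmooth_iteratedDeriv_polyBounded
    (σ : ℝ → ℝ) (hmeas : Measurable σ) (hpb : PolyBounded σ) (k : ℕ) :
    (∀ v : ℝ, 0 < v → ∃ C : ℝ, 0 < C ∧ ∃ ℓ : ℕ,
        ∀ t : ℝ, |iteratedDeriv k (gsmooth σ v) t| ≤ C * |t| ^ ℓ + C) ∧
      ∃ C : ℝ, 0 < C ∧ ∃ ℓ : ℕ, ∀ t : ℝ, ∀ v : ℝ, 1 / 2 ≤ v → v ≤ 1 →
        |iteratedDeriv k (gsmooth σ v) t| ≤ C * t ^ (2 * ℓ) + C := by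
  refine ⟨fun v hv => ?_, ?_⟩
  · obtain ⟨C, hC, l, h⟩ := gs_bound σ hmeas hpb k v v hv
    exact ⟨C, hC, l, fun t => h t v le_rfl le_rfl⟩
  · obtain ⟨C, hC, l, h⟩ := gs_bound σ hmeas hpb k (1 / 2) 1 (by norm_num)
    refine ⟨2 * C, by positivity, l, fun t v h1 h2 => (h t v h1 h2).trans ?_⟩
    have e : t ^ (2 * l) = (|t| ^ l) ^ 2 := by
      rw [← pow_mul, mul_comm l 2, pow_mul, pow_mul, sq_abs]
    rw [e]
    nlinarith [sq_nonneg (|t| ^ l - 1), mul_nonneg hC.le (sq_nonneg (|t| ^ l - 1)),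
      mul_nonneg hC.le (sq_nonneg (|t| ^ l))]
end
end
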